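/- Let M be a connected multigraph with m = ‖M‖ edges and let G be a graph on n = |V(G)| vertices. If the family L(M,G) of maximum M-subdivisions in G is pairwise intersecting and m^3 < n, then τ(M,G) ≤ max{5·n^{2/3}, 2·m^2·n^{1/3}}. -/

import Mathlib

open SimpleGraph

/-- A multigraph with vertex type `W` and edge type `F`: each edge has an
unordered pair of endpoints (possibly equal, giving a loop). -/
structure Multigraph (W : Type*) (F : Type*) where
  ends : F → Sym2 W

namespace Multigraph

variable {W F : Type*}

/-- Adjacency in a multigraph. -/
def Adj (M : Multigraph W F) (u v : W) : Prop :=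
  ∃ e : F, M.ends e = s(u, v)

/-- A multigraph is connected if it is nonempty and any two vertices are joined by a walk. -/
def Connected (M : Multigraph W F) : Prop :=
  Nonempty W ∧ ∀ u v : W, Relation.ReflTransGen M.Adj u v

/-- Delete the edge `e` from the multigraph `M`. -/
def deleteEdge (M : Multigraph W F) (e : F) : Multigraph W {f : F // f ≠ e} where
  ends f := M.ends f.1

/-- An edge of a (connected) multigraph is a cut-edge if deleting it disconnects
the multigraph. -/
def IsCutEdge (M : Multigraph W F) (e : F) : Prop :=
  ¬ (M.deleteEdge e).Connected

end Multigraph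

variable {V W F : Type*}

/-- `Q` is (the subgraph realizing) an `M`-subdivision inside the simple graph `G`:
there is an injective placement `b` of the branch vertices of `M`, and for each edge
`e` of `M` with ends `u e`, `v e` a path (a cycle, if `e` is a loop) of `G` joining
`b (u e)` to `b (v e)`; these paths are internally disjoint from each other and from
the branch vertices, are pairwise edge-disjoint, and their union is exactly `Q`. -/
def IsSubdivisionIn (M : Multigraph W F) (G : SimpleGraph V) (Q : G.Subgraph) : Prop :=
  ∃ (b : W → V) (u v : F → W) (P : ∀ e : F, G.Walk (b (u e)) (b (v e))),
    Function.Injective b ∧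
    (∀ e, M.ends e = s(u e, v e)) ∧
    (∀ e, ∀ h : u e = v e, ((P e).copy rfl (congrArg b h.symm)).IsCycle) ∧
    (∀ e, u e ≠ v e → (P e).IsPath) ∧
    (∀ e, ∀ x ∈ (P e).support, x ∈ Set.range b → x = b (u e) ∨ x = b (v e)) ∧
    (∀ e e', e ≠ e' → ∀ x, x ∈ (P e).support → x ∈ (P e').support → x ∈ Set.range b) ∧
    (∀ e e', e ≠ e' → ∀ a, a ∈ (P e).edges → a ∉ (P e').edges) ∧
    Q.verts = Set.range b ∪ ⋃ e, {x | x ∈ (P e).support} ∧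
    (∀ x y, Q.Adj x y ↔ ∃ e, (P e).toSubgraph.Adj x y)

/-- `Q` is a maximum `M`-subdivision among those contained in the subgraph `H` of `G`
(maximum with respect to the number of edges). -/
def IsMaxSubdivisionIn (M : Multigraph W F) (G : SimpleGraph V) (H Q : G.Subgraph) : Prop :=
  IsSubdivisionIn M G Q ∧ Q ≤ H ∧
    ∀ R : G.Subgraph, IsSubdivisionIn M G R → R ≤ H →
      R.edgeSet.ncard ≤ Q.edgeSet.ncard

/-- The family `L(M,H)` of maximum `M`-subdivisions in `H` is pairwise intersecting. -/
def PairwiseIntersectingIn (M : Multigraph W F) (G : SimpleGraph V) (H : G.Subgraph) : Prop :=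
  ∀ Q R : G.Subgraph, IsMaxSubdivisionIn M G H Q → IsMaxSubdivisionIn M G H R →
    (Q.verts ∩ R.verts).Nonempty

/-- `S` is a transversal of the family `L(M,H)` of maximum `M`-subdivisions in `H`. -/
def IsTransversalIn (M : Multigraph W F) (G : SimpleGraph V) (H : G.Subgraph)
    (S : Set V) : Prop :=
  ∀ Q : G.Subgraph, IsMaxSubdivisionIn M G H Q → (S ∩ Q.verts).Nonempty

/-- `(X, Y)` is an `H`-pretransversal: `Y ⊆ X ⊆ V(H)`, `n^{1/3}·|Y| ≤ |X|`
(where `n = |V(G)|`), and every maximum `M`-subdivision `Q` in `H` satisfies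
`Q ⊆ H − X` or `Q ∩ Y ≠ ∅`. -/
def IsPretransversal [Fintype V] (M : Multigraph W F) (G : SimpleGraph V)
    (H : G.Subgraph) (X Y : Set V) : Prop :=
  Y ⊆ X ∧ X ⊆ H.verts ∧
    (Fintype.card V : ℝ) ^ ((1 : ℝ) / 3) * (Y.ncard : ℝ) ≤ (X.ncard : ℝ) ∧
    ∀ Q : G.Subgraph, IsMaxSubdivisionIn M G H Q →
      Q ≤ H.deleteVerts X ∨ (Q.verts ∩ Y).Nonempty

/-- An `A,B`-connector of size `k` inside the subgraph `H` of `G`: `k` pairwise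
vertex-disjoint paths of `H`, each meeting `A` exactly in its first vertex and
meeting `B` exactly in its last vertex. -/
def IsConnector (G : SimpleGraph V) (H : G.Subgraph) (A B : Set V) (k : ℕ) : Prop :=
  ∃ (a : Fin k → V) (b : Fin k → V) (p : ∀ i : Fin k, G.Walk (a i) (b i)),
    (∀ i, (p i).IsPath) ∧
    (∀ i, (p i).toSubgraph ≤ H) ∧
    (∀ i, {x | x ∈ (p i).support} ∩ A = {a i}) ∧
    (∀ i, {x | x ∈ (p i).support} ∩ B = {b i}) ∧
    (∀ i j, i ≠ j → ∀ x, x ∈ (p i).support → x ∉ (p j).support)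

/-
Write `N = n^(1/3)` and `L = max N m`. A maximal pretransversal `(U, Y)` of ratio `N` costs
`|Y| ≤ N²` vertices, and its maximality makes every separation of `G - U` unbalanced: one side is
smaller than `N` times the separator. Suppose that no `4NL` vertices meet all members of `L(M,G)`
that avoid `U`. These members are connected and pairwise intersecting, so they define a haven of
order more than `4NL` in `G - U`, and hence there is a cycle longer than `4NL`. Unbalanced
separations make balls grow quickly, so long cycles have shortcuts and there is also a cycle `C` of
length between `2NL` and `4NL`. Some maximum subdivision `Q` avoids both `U` and `C`; it has more
than `4NL` vertices. Cut its paths into at most `N + m` segments of about `N²` vertices each. If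
some segment cannot be separated from `C` by one vertex, then two disjoint paths between them and
the longer arc of `C` form a detour that makes `Q` longer. Otherwise `N + m` vertices separate `C`
from `Q`, although `C` and `Q` have at least `2NL ≥ N(N + m)` vertices each: a balanced separation.
-/

variable {G H : SimpleGraph V} {A B X Y : Set V} {u v w x y : V}

/-- The graph `G[X]`, kept on the vertex type of `G`: vertices outside `X` become isolated. In
particular `restrict G Xᶜ` stands for `G - X`. -/
def restrict (G : SimpleGraph V) (X : Set V) : SimpleGraph V :=
  (G.induce X).spanningCoe

lemma restrict_adj : (restrict G X).Adj u v ↔ G.Adj u v ∧ u ∈ X ∧ v ∈ X := by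
  simp only [restrict, map_adj, comap_adj, Function.Embedding.subtype_apply, Subtype.exists]
  grind

lemma restrict_le : restrict G X ≤ G :=
  spanningCoe_induce_le G X

lemma restrict_mono (h : X ⊆ Y) : restrict G X ≤ restrict G Y := fun _ _ hadj =>
  restrict_adj.2 ((restrict_adj.1 hadj).imp_right (And.imp (@h _) (@h _)))

lemma mem_of_mem_support_restrict (p : (restrict G X).Walk u v) (hu : u ∈ X)
    (hx : x ∈ p.support) : x ∈ X := by
  induction p with
  | nil => simpa [List.mem_singleton.1 hx] using hu
  | cons hadj p ih =>
    rcases List.mem_cons.1 hx with rfl | hx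
    · exact hu
    · exact ih (restrict_adj.1 hadj).2.2 hx

lemma mem_edgeSet_restrict (p : G.Walk u v) (h : ∀ x ∈ p.support, x ∈ X) :
    ∀ e ∈ p.edges, e ∈ (restrict G X).edgeSet := by
  refine Sym2.ind fun x y he => ?_
  exact restrict_adj.2 ⟨p.adj_of_mem_edges he, h _ (p.fst_mem_support_of_mem_edges he),
    h _ (p.snd_mem_support_of_mem_edges he)⟩

lemma exists_restrict_walk (p : G.Walk u v) (h : ∀ x ∈ p.support, x ∈ X) :
    ∃ q : (restrict G X).Walk u v, q.support = p.support :=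
  ⟨p.transfer _ (mem_edgeSet_restrict p h), p.support_transfer _⟩

lemma preconnected_induce_iff_reachable :
    (G.induce X).Preconnected ↔ ∀ u ∈ X, ∀ v ∈ X, (restrict G X).Reachable u v := by
  refine ⟨fun h u hu v hv => ?_, fun h u v => ?_⟩
  · exact (h ⟨u, hu⟩ ⟨v, hv⟩).map (Embedding.spanningCoe (G.induce X)).toHom
  · obtain ⟨p⟩ := h u u.2 v v.2
    exact ⟨(p.mapLe restrict_le).induce X fun x hx =>
      mem_of_mem_support_restrict p u.2 (by simpa using hx)⟩

lemma exists_walk_to_first_mem (p : G.Walk u v) (h : ∃ x ∈ p.support, x ∈ X) :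
    ∃ x ∈ X, ∃ q : G.Walk u x, q.support ⊆ p.support ∧ ∀ y ∈ q.support, y ∈ X → y = x := by
  classical
  obtain ⟨x, hx, hxp, hfirst⟩ := p.exists_mem_support_forall_mem_support_imp_eq
    {x ∈ p.support.toFinset | x ∈ X} (h.imp fun x hx => by simp [hx])
  have hsub := p.support_takeUntil_subset_support hxp
  exact ⟨x, (Finset.mem_filter.1 hx).2, p.takeUntil x hxp, hsub,
    fun y hy hyX => hfirst y (by simpa [hyX] using hsub hy) hy⟩

lemma exists_path_meeting_only_ends (p : G.Walk u v) (hu : u ∈ A) (hv : v ∈ B) :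
    ∃ x ∈ A, ∃ y ∈ B, ∃ q : G.Walk x y, q.IsPath ∧ q.support ⊆ p.support ∧
      (∀ z ∈ q.support, z ∈ A → z = x) ∧ ∀ z ∈ q.support, z ∈ B → z = y := by
  classical
  obtain ⟨y, hy, q, hqp, hqB⟩ := exists_walk_to_first_mem p ⟨v, p.end_mem_support, hv⟩
  obtain ⟨x, hx, r, hrq, hrA⟩ :=
    exists_walk_to_first_mem q.reverse ⟨u, by simp, hu⟩
  have hsub : r.reverse.bypass.support ⊆ q.support := fun z hz => by
    simpa using hrq (by simpa using r.reverse.support_bypass_subset_support hz)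
  exact ⟨x, hx, y, hy, r.reverse.bypass, r.reverse.bypass_isPath, fun z hz => hqp (hsub hz),
    fun z hz => hrA z (by simpa using r.reverse.support_bypass_subset_support hz),
    fun z hz => hqB z (hsub hz)⟩

lemma start_notMem_support_tail {p : G.Walk u v} (hp : p.IsPath) : u ∉ p.support.tail := by
  have := hp.support_nodup
  rw [← p.cons_tail_support] at this
  exact (List.nodup_cons.1 this).1

lemma notMem_support_dropUntil_start [DecidableEq V] {p : G.Walk u v} (hp : p.IsPath)
    (hx : x ∈ p.support) (hxu : x ≠ u) : u ∉ (p.dropUntil x hx).support := fun hu => by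
  have hpath := hp
  rw [← p.take_spec hx] at hpath
  exact hpath.ne_of_mem_support_of_append hxu.symm (Walk.start_mem_support _) hu rfl

/-- `Z` separates `A` from `B` in `G`, as in Menger's theorem: every walk from `A` to `B`, trivial
ones included, meets `Z`. -/
def Separates (G : SimpleGraph V) (Z A B : Set V) : Prop :=
  ∀ a ∈ A, ∀ b ∈ B, ∀ p : G.Walk a b, ∃ z ∈ p.support, z ∈ Z

/-- There are disjoint walks from `u` and `v` to `B`. -/
def Linked (G : SimpleGraph V) (u v : V) (B : Set V) : Prop :=
  ∃ b ∈ B, ∃ b' ∈ B, ∃ (p : G.Walk u b) (q : G.Walk v b'), p.support.Disjoint q.support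

/-- There are two paths from `w` to `B` that share only `w`; for `w ∈ B` they may be trivial. -/
def HasFan (G : SimpleGraph V) (w : V) (B : Set V) : Prop :=
  ∃ b ∈ B, ∃ b' ∈ B, ∃ (p : G.Walk w b) (q : G.Walk w b'), p.IsPath ∧ q.IsPath ∧
    ∀ x ∈ p.support, x ∈ q.support → x = w

namespace HasFan

lemma of_mem (hw : w ∈ B) : HasFan G w B :=
  ⟨w, hw, w, hw, .nil, .nil, .nil, .nil, by simp⟩

lemma linked (h : HasFan G w B) {b : V} (hb : b ∈ B) (r : G.Walk y b) (hw : w ∉ r.support) :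
    Linked G w y B := by
  classical
  obtain ⟨u, hu, v, hv, p, q, hp, hq, hpq⟩ := h
  by_cases hr : ∃ x ∈ r.support, x ∈ {x | x ∈ p.support ∨ x ∈ q.support}
  · obtain ⟨x, hx, r', hr'r, hr'⟩ := exists_walk_to_first_mem r hr
    have hxw : x ≠ w := fun hxw => hw (hr'r (hxw ▸ r'.end_mem_support))
    wlog hxp : x ∈ p.support generalizing u v p q
    · exact this v hv u hu q p hq hp (fun z hzq hzp => hpq z hzp hzq)
        (hr.imp fun z => .imp_right .symm) hx.symm
        (fun z hz hzqp => hr' z hz hzqp.symm) (hx.resolve_left hxp)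
    refine ⟨v, hv, u, hu, q, r'.append (p.dropUntil x hxp), fun z hzq hz => ?_⟩
    rcases (Walk.mem_support_append_iff _ _).1 hz with hz | hz
    · obtain rfl := hr' z hz (.inr hzq)
      exact hxw (hpq z hxp hzq)
    · obtain rfl := hpq z (p.support_dropUntil_subset_support hxp hz) hzq
      exact notMem_support_dropUntil_start hp hxp hxw hz
  · exact ⟨u, hu, b, hb, p, r, fun x hxp hxr => hr ⟨x, hxr, .inl hxp⟩⟩

lemma of_linked (hadj : G.Adj w y) (h : Linked G w y B) : HasFan G y B := by
  classical
  obtain ⟨b, hb, b', hb', p, q, hpq⟩ := h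
  refine ⟨b, hb, b', hb', (p.cons hadj.symm).bypass, q.bypass, Walk.bypass_isPath _,
    Walk.bypass_isPath _, fun x hxp hxq => ?_⟩
  have hx := Walk.support_bypass_subset_support _ hxp
  rw [Walk.support_cons, List.mem_cons] at hx
  exact hx.resolve_right fun hx => hpq hx (q.support_bypass_subset_support hxq)

lemma along_path {a : V} (p : G.Walk w a) (hp : p.IsPath) (h : HasFan G w B)
    (hB : ∀ x ∈ p.support, x ≠ a → ∃ b ∈ B, ∃ r : G.Walk a b, x ∉ r.support) :
    HasFan G a B := by
  induction p with
  | nil => exact h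
  | @cons w y a hadj p ih =>
    rw [Walk.cons_isPath_iff] at hp
    obtain ⟨b, hb, r, hr⟩ := hB w (by simp) fun hw => hp.2 (hw ▸ p.end_mem_support)
    refine ih hp.1 (of_linked hadj (h.linked hb (p.append r) ?_)) fun x hx => hB x (by simp [hx])
    rw [Walk.mem_support_append_iff, not_or]
    exact ⟨hp.2, hr⟩

end HasFan

/-- Menger's theorem for two paths starting in a connected set. A fan to `B` is carried along a path
from `B` to `A`, one augmentation per edge. -/
theorem exists_linked_of_forall_not_separates [Nonempty V] (hA : (G.induce A).Preconnected)
    (h : ∀ z, ¬ Separates G {z} A B) : ∃ a ∈ A, ∃ a' ∈ A, Linked G a a' B := by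
  have avoid : ∀ z, ∃ a ∈ A, ∃ b ∈ B, ∃ p : G.Walk a b, z ∉ p.support := fun z => by
    simpa only [Separates, not_forall, Set.mem_singleton_iff, exists_eq_right, exists_prop]
      using h z
  obtain ⟨a₀, ha₀, b₀, hb₀, p₀, -⟩ := avoid (Classical.arbitrary V)
  obtain ⟨b, hb, a, ha, p, hp, -, -, hpA⟩ := exists_path_meeting_only_ends p₀.reverse hb₀ ha₀
  have hfan : HasFan G a B := (HasFan.of_mem hb).along_path p hp fun x hx hxa => by
    obtain ⟨a', ha', b', hb', r, hxr⟩ := avoid x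
    obtain ⟨q⟩ := preconnected_induce_iff_reachable.1 hA a ha a' ha'
    refine ⟨b', hb', (q.mapLe restrict_le).append r, fun hx' => ?_⟩
    rcases (Walk.mem_support_append_iff _ _).1 hx' with hxq | hx'
    · exact hxa (hpA x hx (mem_of_mem_support_restrict q ha (by simpa using hxq)))
    · exact hxr hx'
  obtain ⟨a', ha', b', hb', r, har⟩ := avoid a
  exact ⟨a, ha, a', ha', hfan.linked hb' r har⟩

lemma isCycle_append_reverse {p q : G.Walk x y} (hp : p.IsPath) (hq : q.IsPath)
    (hpq : ∀ z ∈ p.support, z ∈ q.support → z = x ∨ z = y) (h : 1 < p.length ∨ 1 < q.length) :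
    (p.append q.reverse).IsCycle := by
  refine hp.isCycle_append hq.reverse (fun z hzp hzq => ?_) (by simpa using h)
  rcases hpq z (List.mem_of_mem_tail hzp) (by simpa using List.mem_of_mem_tail hzq) with rfl | rfl
  · exact start_notMem_support_tail hp hzp
  · exact start_notMem_support_tail hq.reverse hzq

lemma isCycle_append_comm {p : G.Walk u v} {q : G.Walk v u} (h : (p.append q).IsCycle) :
    (q.append p).IsCycle := by
  have hlen := h.three_le_length
  rw [Walk.isCycle_def, Walk.isTrail_def, Walk.tail_support_append, Walk.edges_append] at h ⊢
  refine ⟨List.perm_append_comm.nodup_iff.1 h.1, fun hnil => ?_,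
    List.perm_append_comm.nodup_iff.1 h.2.2⟩
  have := congrArg Walk.length hnil
  simp only [Walk.length_append, Walk.length_nil] at this hlen
  omega

lemma eq_of_getVert_eq {c : G.Walk u u} (hc : c.IsCycle) {i j : ℕ} (hi : i < c.length)
    (hj : j < c.length) (h : c.getVert i = c.getVert j) : i = j :=
  hc.getVert_injOn' (Nat.le_sub_one_of_lt hi) (Nat.le_sub_one_of_lt hj) h

lemma exists_getVert_eq_of_isCycle {c : G.Walk u u} (hc : c.IsCycle) (hx : x ∈ c.support) :
    ∃ i < c.length, c.getVert i = x := by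
  obtain ⟨i, rfl, hi⟩ := Walk.mem_support_iff_exists_getVert.1 hx
  rcases hi.lt_or_eq with hi | rfl
  · exact ⟨i, hi, rfl⟩
  · exact ⟨0, by have := hc.three_le_length; omega, by simp⟩

/-- The distance of the positions `i, j ≤ l` on a cycle of length `l`, measured along the cycle. -/
def cyclicDist (l i j : ℕ) : ℕ :=
  min (Nat.dist i j) (l - Nat.dist i j)

lemma cyclicDist_comm (l i j : ℕ) : cyclicDist l i j = cyclicDist l j i := by
  rw [cyclicDist, cyclicDist, Nat.dist_comm]

lemma cyclicDist_triangle {l i j k : ℕ} (hi : i < l) (hj : j < l) (hk : k < l) :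
    cyclicDist l i k ≤ cyclicDist l i j + cyclicDist l j k := by
  simp only [cyclicDist, Nat.dist]
  omega

lemma exists_long_arc {c : G.Walk u u} (hc : c.IsCycle) {i j : ℕ} (hi : i < c.length)
    (hj : j < c.length) (hij : i ≠ j) :
    ∃ p : G.Walk (c.getVert i) (c.getVert j), p.IsPath ∧ p.support ⊆ c.support ∧
      p.length = c.length - cyclicDist c.length i j := by
  wlog h : i < j generalizing i j
  · obtain ⟨p, hp, hpc, hpl⟩ := this hj hi hij.symm (by omega)
    exact ⟨p.reverse, hp.reverse, by simpa using hpc,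
      by rw [Walk.length_reverse, hpl, cyclicDist_comm]⟩
  let d := (c.drop i).append (c.take i)
  have hd : d.IsCycle := isCycle_append_comm (by rwa [c.append_take_drop_eq])
  have hdl : d.length = c.length := by simp [d]; omega
  have hdc : d.support ⊆ c.support := fun x hx => by
    rw [← c.append_take_drop_eq i, Walk.mem_support_append_iff]
    exact ((Walk.mem_support_append_iff _ _).1 hx).symm
  have hdj : d.getVert (j - i) = c.getVert j := by
    rw [Walk.getVert_append, if_pos (by simp; omega), Walk.drop_getVert, Nat.add_sub_cancel' h.le]
  have htake : (d.take (j - i)).IsPath := hd.isPath_take (by omega)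
  have hdrop : (d.drop (j - i)).IsPath := hd.isPath_drop (by omega)
  rcases le_total (c.length - (j - i)) (j - i) with hle | hle
  · refine ⟨(d.take (j - i)).copy rfl hdj, by simpa, ?_, ?_⟩
    · simpa only [Walk.support_copy] using
        List.Subset.trans (d.isSubwalk_take _).support_subset hdc
    · simp [cyclicDist, Nat.dist]; omega
  · refine ⟨(d.drop (j - i)).reverse.copy rfl hdj, by simpa, ?_, ?_⟩
    · simpa only [Walk.support_copy, Walk.support_reverse, List.reverse_subset] using
        List.Subset.trans (d.isSubwalk_drop _).support_subset hdc
    · simp [cyclicDist, Nat.dist]; omega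

/-- If the shortcut meets the cycle between its ends, then by the triangle inequality one of its two
pieces is a shortcut again; otherwise it replaces the shorter arc. -/
lemma exists_shorter_cycle_of_shortcut {c : G.Walk u u} (hc : c.IsCycle) {i j : ℕ}
    (hi : i < c.length) (hj : j < c.length) (p : G.Walk (c.getVert i) (c.getVert j))
    (hp : p.length < cyclicDist c.length i j) :
    ∃ (v : V) (d : G.Walk v v), d.IsCycle ∧ d.length < c.length ∧ c.length + 2 ≤ 2 * d.length := by
  classical
  induction hn : p.length using Nat.strong_induction_on generalizing i j with
  | _ n ih =>
  have hq := p.length_bypass_le_length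
  have hij : i ≠ j := by rintro rfl; simp [cyclicDist, Nat.dist] at hp
  by_cases hear : ∀ z ∈ p.bypass.support, z ∈ c.support → z = c.getVert i ∨ z = c.getVert j
  · obtain ⟨r, hr, hrc, hrl⟩ := exists_long_arc hc hi hj hij
    have hpos : p.bypass.length ≠ 0 := fun h =>
      hij (eq_of_getVert_eq hc hi hj (Walk.eq_of_length_eq_zero h))
    have hle : 2 * cyclicDist c.length i j ≤ c.length := by unfold cyclicDist; omega
    have := hc.three_le_length
    refine ⟨_, _, isCycle_append_reverse p.bypass_isPath hr
      (fun z hz hzr => hear z hz (hrc hzr)) (.inr (by omega)), ?_, ?_⟩ <;>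
    · rw [Walk.length_append, Walk.length_reverse]
      omega
  · push Not at hear
    obtain ⟨z, hz, hzc, hzi, hzj⟩ := hear
    obtain ⟨k, hk, rfl⟩ := exists_getVert_eq_of_isCycle hc hzc
    have htake := Walk.length_takeUntil_lt_length hz hzj
    have hdrop := Walk.length_dropUntil_lt_length hz hzi
    have hadd := congrArg Walk.length (p.bypass.take_spec hz)
    rw [Walk.length_append] at hadd
    have htri := cyclicDist_triangle hi hk hj
    by_cases hshort : (p.bypass.takeUntil _ hz).length < cyclicDist c.length i k
    · exact ih _ (by omega) hi hk _ hshort rfl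
    · exact ih _ (by omega) hk hj (p.bypass.dropUntil _ hz) (by omega) rfl

section Expansion

/-- The vertices at distance `k` from `A`. -/
def distLayer (G : SimpleGraph V) (A : Set V) (k : ℕ) : Set V :=
  {v | IsLeast {l | ∃ a ∈ A, ∃ p : G.Walk a v, p.length = l} k}

lemma pairwise_disjoint_distLayer : Pairwise (Function.onFun Disjoint (distLayer G A)) :=
  fun _ _ hij => Set.disjoint_left.2 fun _ hi hj => hij (hi.unique hj)

lemma separates_distLayer {k : ℕ} (h : ∀ a ∈ A, ∀ b ∈ B, ∀ p : G.Walk a b, k ≤ p.length) :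
    Separates G (distLayer G A k) A B := by
  suffices ∀ {x b : V} (p : G.Walk x b), b ∈ B → (∃ a ∈ A, ∃ q : G.Walk a x, q.length ≤ k) →
      ∃ z ∈ p.support, z ∈ distLayer G A k from
    fun a ha b hb p => this p hb ⟨a, ha, .nil, Nat.zero_le k⟩
  intro x b p hb
  induction p with
  | nil =>
    rintro ⟨a, ha, q, hq⟩
    refine ⟨_, Walk.start_mem_support _, ⟨a, ha, q, hq.antisymm (h a ha _ hb q)⟩, ?_⟩
    rintro _ ⟨a', ha', q', rfl⟩
    exact h a' ha' _ hb q'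
  | @cons x y b hadj p ih =>
    rintro ⟨a, ha, q, hq⟩
    by_cases hy : ∃ a ∈ A, ∃ q : G.Walk a y, q.length ≤ k
    · obtain ⟨z, hz, hzk⟩ := ih hb hy
      exact ⟨z, by simp [hz], hzk⟩
    · have hfar : ∀ a ∈ A, ∀ q : G.Walk a x, k ≤ q.length := fun a ha q => by
        by_contra! hlt
        exact hy ⟨a, ha, q.concat hadj, by rwa [Walk.length_concat]⟩
      refine ⟨x, Walk.start_mem_support _, ⟨a, ha, q, hq.antisymm (hfar a ha q)⟩, ?_⟩
      rintro _ ⟨a', ha', q', rfl⟩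
      exact hfar a' ha' q'

variable [Finite V]

lemma sum_ncard_le_ncard {ι : Type*} {f : ι → Set V} (hf : Pairwise (Function.onFun Disjoint f))
    (s : Finset ι) (hX : ∀ i ∈ s, f i ⊆ X) : ∑ i ∈ s, (f i).ncard ≤ X.ncard := by
  rw [← finsum_mem_coe_finset, ← s.finite_toSet.ncard_biUnion (fun _ _ => Set.toFinite _)
    fun i _ j _ hij => hf hij]
  exact Set.ncard_le_ncard (Set.iUnion₂_subset hX)

lemma exists_short_walk_of_expansion {N : ℝ} {g : ℕ} (hN : 0 ≤ N) (hg : 0 < g)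
    (hV : N * Nat.card V ≤ (g : ℝ) ^ 2) (hsep : ∀ Z, Separates G Z A B → (g : ℝ) < N * Z.ncard) :
    ∃ a ∈ A, ∃ b ∈ B, ∃ p : G.Walk a b, p.length + 2 ≤ g := by
  by_contra! hfar
  have hlayer : ∀ k ∈ Finset.range g, (g : ℝ) < N * (distLayer G A k).ncard := fun k hk =>
    hsep _ (separates_distLayer fun a ha b hb p => by
      have := hfar a ha b hb p
      have := Finset.mem_range.1 hk
      omega)
  have hsum : ∑ k ∈ Finset.range g, (distLayer G A k).ncard ≤ Nat.card V :=
    Set.ncard_univ V ▸ sum_ncard_le_ncard pairwise_disjoint_distLayer _ fun _ _ =>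
      Set.subset_univ _
  have hlt := Finset.sum_lt_sum_of_nonempty (Finset.nonempty_range_iff.2 hg.ne') hlayer
  rw [Finset.sum_const, Finset.card_range, nsmul_eq_mul, ← Finset.mul_sum, ← Nat.cast_sum] at hlt
  have := mul_le_mul_of_nonneg_left (Nat.cast_le (α := ℝ).2 hsum) hN
  linarith [sq (g : ℝ)]

/-- Every separation of two nonempty subsets of `T` has a side of order less than `N` times that of
the separator. -/
def HasUnbalancedSeparations (G : SimpleGraph V) (T : Set V) (N : ℝ) : Prop :=
  ∀ ⦃A B Z : Set V⦄, A ⊆ T → B ⊆ T → A.Nonempty → B.Nonempty → Separates G Z A B →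
    (A.ncard : ℝ) < N * Z.ncard ∨ (B.ncard : ℝ) < N * Z.ncard

/-- The positions are chosen so that any walk of length at most `g - 2` between the two segments is
a shortcut. -/
lemma HasUnbalancedSeparations.exists_shorter_cycle {T : Set V} {N : ℝ} {g : ℕ}
    (hG : HasUnbalancedSeparations G T N) (hN : 0 ≤ N) (hg : 0 < g)
    (hV : N * Nat.card V ≤ (g : ℝ) ^ 2) {c : G.Walk u u} (hc : c.IsCycle)
    (hcT : ∀ x ∈ c.support, x ∈ T) (hlong : 4 * g < c.length + 4) :
    ∃ (v : V) (d : G.Walk v v), d.IsCycle ∧ d.length < c.length ∧ c.length + 2 ≤ 2 * d.length := by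
  let seg (a : ℕ) : Set V := c.getVert '' Set.Ico a (a + g)
  have hsegT (a : ℕ) : seg a ⊆ T := by
    rintro _ ⟨i, -, rfl⟩
    exact hcT _ (c.getVert_mem_support i)
  have hseg (a : ℕ) : (seg a).Nonempty := (Set.nonempty_Ico.2 (by omega)).image _
  have hcard (a : ℕ) (ha : a + g ≤ c.length) : (seg a).ncard = g := by
    rw [Set.InjOn.ncard_image fun i hi j hj => eq_of_getVert_eq hc (hi.2.trans_le ha)
      (hj.2.trans_le ha), ← Finset.coe_Ico, Set.ncard_coe_finset, Nat.card_Ico,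
      Nat.add_sub_cancel_left]
  have h3 := hc.three_le_length
  obtain ⟨_, ⟨i, hi, rfl⟩, _, ⟨j, hj, rfl⟩, p, hp⟩ :=
    exists_short_walk_of_expansion (G := G) (A := seg 0) (B := seg (2 * g - 2)) hN hg hV
      fun Z hZ => by
        have := hG (hsegT _) (hsegT _) (hseg _) (hseg _) hZ
        rwa [hcard _ (by omega), hcard _ (by omega), or_self] at this
  rw [Set.mem_Ico] at hi hj
  exact exists_shorter_cycle_of_shortcut hc (by omega) (by omega) p
    (by simp only [cyclicDist, Nat.dist]; omega)

lemma HasUnbalancedSeparations.exists_cycle_length_mem_Icc {T : Set V} {N s r : ℝ}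
    (hG : HasUnbalancedSeparations G T N) (hT : G.support ⊆ T) (hN : 0 ≤ N) (hs : 0 < s)
    (hV : N * Nat.card V ≤ s ^ 2) (hr : 2 * s ≤ r)
    (hc : ∃ (v : V) (c : G.Walk v v), c.IsCycle ∧ r ≤ c.length) :
    ∃ (v : V) (c : G.Walk v v), c.IsCycle ∧ (c.length : ℝ) ∈ Set.Icc r (2 * r) := by
  classical
  have hex : ∃ (l : ℕ) (v : V) (c : G.Walk v v), c.IsCycle ∧ r ≤ c.length ∧ c.length = l :=
    let ⟨v, c, hc, hcr⟩ := hc; ⟨_, v, c, hc, hcr, rfl⟩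
  obtain ⟨v, c, hc, hcr, hl⟩ := Nat.find_spec hex
  refine ⟨v, c, hc, hcr, ?_⟩
  by_contra! hlong
  have hceil : (⌈s⌉₊ : ℝ) < s + 1 := Nat.ceil_lt_add_one hs.le
  obtain ⟨w, d, hd, hdc, hcd⟩ := hG.exists_shorter_cycle hN (Nat.ceil_pos.2 hs)
    (hV.trans (pow_le_pow_left₀ hs.le (Nat.le_ceil s) 2)) hc
    (fun x hx => hT (mem_support_of_mem_walk_support c hc.not_nil hx))
    (by rw [← Nat.cast_lt (α := ℝ)]; push_cast; linarith)
  have hdr : r ≤ d.length := by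
    have : (c.length + 2 : ℝ) ≤ 2 * d.length := by exact_mod_cast hcd
    linarith
  exact Nat.find_min hex (hl ▸ hdc) ⟨w, d, hd, hdr, rfl⟩

end Expansion

section Flap

/-- A family of connected, pairwise intersecting vertex sets of `G`. -/
structure IsConnectedIntersecting (G : SimpleGraph V) (𝓕 : Set (Set V)) : Prop where
  preconnected : ∀ Q ∈ 𝓕, (G.induce Q).Preconnected
  inter_nonempty : ∀ Q ∈ 𝓕, ∀ R ∈ 𝓕, (Q ∩ R).Nonempty

/-- The part of `G - X` that can be reached from the members of `𝓕` avoiding `X`. For a connected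
intersecting family this is a component of `G - X`, the value at `X` of the haven defined by `𝓕`
(empty if `X` meets all members). -/
def flap (G : SimpleGraph V) (𝓕 : Set (Set V)) (X : Set V) : Set V :=
  {v | ∃ Q ∈ 𝓕, Disjoint Q X ∧ ∃ q ∈ Q, (restrict G Xᶜ).Reachable q v}

variable {𝓕 : Set (Set V)}

lemma notMem_of_mem_flap (hv : v ∈ flap G 𝓕 X) : v ∉ X := by
  obtain ⟨Q, -, hQX, q, hq, ⟨p⟩⟩ := hv
  exact mem_of_mem_support_restrict p (Set.disjoint_left.1 hQX hq) p.end_mem_support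

lemma flap_anti (h : X ⊆ Y) : flap G 𝓕 Y ⊆ flap G 𝓕 X :=
  fun _ ⟨Q, hQ, hQY, q, hq, hqv⟩ =>
    ⟨Q, hQ, hQY.mono_right h, q, hq, hqv.mono (restrict_mono (Set.compl_subset_compl.2 h))⟩

lemma mem_flap_of_adj (hv : v ∈ flap G 𝓕 X) (hadj : G.Adj v w) (hw : w ∉ X) : w ∈ flap G 𝓕 X := by
  obtain ⟨Q, hQ, hQX, q, hq, hqv⟩ := id hv
  have hadj' : (restrict G Xᶜ).Adj v w := restrict_adj.2 ⟨hadj, notMem_of_mem_flap hv, hw⟩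
  exact ⟨Q, hQ, hQX, q, hq, hqv.trans hadj'.reachable⟩

lemma subset_flap {Q : Set V} (hQ : Q ∈ 𝓕) (hQX : Disjoint Q X) : Q ⊆ flap G 𝓕 X :=
  fun q hq => ⟨Q, hQ, hQX, q, hq, .rfl⟩

namespace IsConnectedIntersecting

lemma reachable_of_disjoint (h𝓕 : IsConnectedIntersecting G 𝓕) {Q : Set V} (hQ : Q ∈ 𝓕)
    (hQX : Disjoint Q X) (hu : u ∈ Q) (hv : v ∈ Q) : (restrict G Xᶜ).Reachable u v :=
  (preconnected_induce_iff_reachable.1 (h𝓕.preconnected Q hQ) u hu v hv).mono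
    (restrict_mono hQX.subset_compl_right)

lemma reachable_of_mem_flap (h𝓕 : IsConnectedIntersecting G 𝓕) (hv : v ∈ flap G 𝓕 X)
    (hw : w ∈ flap G 𝓕 X) : (restrict G Xᶜ).Reachable v w := by
  obtain ⟨Q, hQ, hQX, q, hq, hqv⟩ := hv
  obtain ⟨R, hR, hRX, r, hr, hrw⟩ := hw
  obtain ⟨z, hzQ, hzR⟩ := h𝓕.inter_nonempty Q hQ R hR
  exact (hqv.symm.trans (h𝓕.reachable_of_disjoint hQ hQX hq hzQ)).trans
    ((h𝓕.reachable_of_disjoint hR hRX hzR hr).trans hrw)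

lemma flap_subset_flap_insert (h𝓕 : IsConnectedIntersecting G 𝓕)
    (hX : ∃ Q ∈ 𝓕, Disjoint Q (insert x X)) (hx : ∀ v ∈ flap G 𝓕 (insert x X), ¬ G.Adj v x) :
    flap G 𝓕 X ⊆ flap G 𝓕 (insert x X) := by
  obtain ⟨R, hR, hRX⟩ := hX
  obtain ⟨r, hr, -⟩ := h𝓕.inter_nonempty R hR R hR
  intro v hv
  obtain ⟨p⟩ := h𝓕.reachable_of_mem_flap
    (subset_flap hR (hRX.mono_right (Set.subset_insert x X)) hr) hv
  suffices ∀ {u v : V} (_ : (restrict G Xᶜ).Walk u v), u ∈ flap G 𝓕 (insert x X) →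
      v ∈ flap G 𝓕 (insert x X) from this p (subset_flap hR hRX hr)
  intro u v p hu
  induction p with
  | nil => exact hu
  | @cons u w v hadj _ ih =>
    obtain ⟨hadj, -, hwX⟩ := restrict_adj.1 hadj
    refine ih (mem_flap_of_adj hu hadj (Set.mem_insert_iff.not.2 (not_or.2 ⟨?_, hwX⟩)))
    rintro rfl
    exact hx u hu hadj

end IsConnectedIntersecting

end Flap

section OptimalPath

variable {𝓕 : Set (Set V)} {s : ℕ}

/-- A path on at most `s` vertices whose flap is minimal and which is shortest for that flap. -/
structure IsOptimalPath (𝓕 : Set (Set V)) (s : ℕ) (p : G.Walk x y) : Prop where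
  isPath : p.IsPath
  length_lt : p.length < s
  le_of_flap_subset : ∀ {u v : V} (q : G.Walk u v), q.IsPath → q.length < s →
    flap G 𝓕 {z | z ∈ q.support} ⊆ flap G 𝓕 {z | z ∈ p.support} →
    flap G 𝓕 {z | z ∈ p.support} ⊆ flap G 𝓕 {z | z ∈ q.support} ∧ p.length ≤ q.length

lemma exists_isOptimalPath [Finite V] [Nonempty V] (G : SimpleGraph V) (𝓕 : Set (Set V))
    (hs : 0 < s) : ∃ (x y : V) (p : G.Walk x y), IsOptimalPath 𝓕 s p := by
  let f (p : Σ x y : V, G.Walk x y) : ℕ ×ₗ ℕ :=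
    toLex ((flap G 𝓕 {z | z ∈ p.2.2.support}).ncard, p.2.2.length)
  let v := Classical.arbitrary V
  obtain ⟨⟨x, y, p⟩, ⟨hp, hps⟩, hmin⟩ := exists_minimalFor_of_wellFoundedLT
    (fun p : Σ x y : V, G.Walk x y => p.2.2.IsPath ∧ p.2.2.length < s) f ⟨⟨v, v, .nil⟩, .nil, hs⟩
  refine ⟨x, y, p, hp, hps, fun {u v} q hq hqs hqp => ?_⟩
  have hcard := Set.ncard_le_ncard hqp (Set.toFinite _)
  have hle : f ⟨x, y, p⟩ ≤ f ⟨u, v, q⟩ := by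
    by_contra! hlt
    exact (hmin (j := ⟨u, v, q⟩) ⟨hq, hqs⟩ hlt.le).not_gt hlt
  rcases Prod.Lex.le_iff.1 hle with hlt | ⟨heq, hle⟩
  · exact absurd hlt hcard.not_gt
  · exact ⟨(Set.eq_of_subset_of_ncard_le hqp heq.le (Set.toFinite _)).ge, hle⟩

lemma ncard_support_le (p : G.Walk x y) : {z | z ∈ p.support}.ncard ≤ p.length + 1 := by
  classical
  rw [← p.length_support, ← List.coe_toFinset, Set.ncard_coe_finset]
  exact p.support.toFinset_card_le

namespace IsOptimalPath

variable {p : G.Walk x y}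

lemma reverse (hp : IsOptimalPath 𝓕 s p) : IsOptimalPath 𝓕 s p.reverse where
  isPath := hp.isPath.reverse
  length_lt := by simpa using hp.length_lt
  le_of_flap_subset q hq hqs hqp := by
    simpa using hp.le_of_flap_subset q hq hqs (by simpa using hqp)

lemma exists_adj_mem_flap (hp : IsOptimalPath 𝓕 s p) (h𝓕 : IsConnectedIntersecting G 𝓕)
    (hhit : ∀ X : Set V, X.ncard ≤ s → ∃ Q ∈ 𝓕, Disjoint Q X) :
    ∃ v ∈ flap G 𝓕 {z | z ∈ p.support}, G.Adj v x := by
  by_contra! hx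
  obtain ⟨Q, hQ, hQp⟩ := hhit _ ((ncard_support_le p).trans hp.length_lt)
  cases p with
  | nil =>
    obtain ⟨v, hv, -⟩ := h𝓕.inter_nonempty Q hQ Q hQ
    have hset : {z | z ∈ (Walk.nil : G.Walk x x).support} = insert x ∅ := by simp
    rw [hset] at hx hQp
    have hempty := h𝓕.flap_subset_flap_insert ⟨Q, hQ, hQp⟩ hx
    have hxv := (hp.le_of_flap_subset (.nil : G.Walk v v) .nil hp.length_lt
      (hset ▸ (flap_anti (Set.empty_subset _)).trans hempty)).1
    rw [hset] at hxv
    exact notMem_of_mem_flap (hxv (subset_flap hQ hQp hv)) (by simp)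
  | cons hadj q =>
    have hset : {z | z ∈ (Walk.cons hadj q).support} = insert x {z | z ∈ q.support} := by
      ext; simp
    have hq : q.length + 1 < s := hp.length_lt
    rw [hset] at hx hQp
    have := (hp.le_of_flap_subset q hp.isPath.of_cons (by omega)
      (hset ▸ h𝓕.flap_subset_flap_insert ⟨Q, hQ, hQp⟩ hx)).2
    rw [Walk.length_cons] at this
    omega

lemma length_add_one (hp : IsOptimalPath 𝓕 s p) (h𝓕 : IsConnectedIntersecting G 𝓕)
    (hhit : ∀ X : Set V, X.ncard ≤ s → ∃ Q ∈ 𝓕, Disjoint Q X) : p.length + 1 = s := by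
  refine (Nat.succ_le_of_lt hp.length_lt).antisymm (not_lt.1 fun hlt => ?_)
  obtain ⟨v, hv, hvx⟩ := hp.exists_adj_mem_flap h𝓕 hhit
  have hsub := (hp.le_of_flap_subset (.cons hvx p)
    (hp.isPath.cons fun h => notMem_of_mem_flap hv h) hlt
    (flap_anti fun z hz => by simpa using .inr hz)).1
  exact notMem_of_mem_flap (hsub hv) (by simp)

end IsOptimalPath

/-- The ends of an optimal path have neighbours in its flap, so the path closes up through it. -/
theorem IsConnectedIntersecting.exists_long_cycle [Finite V]
    (h𝓕 : IsConnectedIntersecting G 𝓕) (hs : 2 ≤ s)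
    (hhit : ∀ X : Set V, X.ncard ≤ s → ∃ Q ∈ 𝓕, Disjoint Q X) :
    ∃ (v : V) (c : G.Walk v v), c.IsCycle ∧ s < c.length := by
  classical
  obtain ⟨Q, hQ, -⟩ := hhit ∅ (by simp)
  have : Nonempty V := ⟨(h𝓕.inter_nonempty Q hQ Q hQ).some⟩
  obtain ⟨x, y, p, hp⟩ := exists_isOptimalPath G 𝓕 (s := s) (by omega)
  have hlen := hp.length_add_one h𝓕 hhit
  have hxy : x ≠ y := by
    rintro rfl
    have := (Walk.isPath_iff_nil.1 hp.isPath).length_eq_zero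
    omega
  obtain ⟨v, hv, hvx⟩ := hp.exists_adj_mem_flap h𝓕 hhit
  obtain ⟨w, hw, hwy⟩ := hp.reverse.exists_adj_mem_flap h𝓕 hhit
  simp only [Walk.support_reverse, List.mem_reverse] at hw
  obtain ⟨t⟩ := h𝓕.reachable_of_mem_flap hv hw
  let q := (t.mapLe restrict_le).bypass
  have hqp : ∀ z ∈ q.support, z ∉ p.support := fun z hz =>
    mem_of_mem_support_restrict t (notMem_of_mem_flap hv)
      (by simpa using Walk.support_bypass_subset_support _ hz)
  have hd : (Walk.cons hvx.symm (q.concat hwy)).IsPath := by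
    rw [Walk.cons_isPath_iff, Walk.support_concat, List.mem_append, List.mem_singleton, not_or]
    exact ⟨(Walk.bypass_isPath _).concat (fun h => hqp y h p.end_mem_support) _,
      fun h => hqp x h p.start_mem_support, hxy⟩
  refine ⟨x, _, isCycle_append_reverse hp.isPath hd (fun z hzp hzd => ?_) (.inr (by simp)), ?_⟩
  · simp only [Walk.support_cons, Walk.support_concat, List.mem_cons, List.mem_append,
      List.not_mem_nil, or_false] at hzd
    exact hzd.imp_right fun h => h.resolve_left fun hzq => hqp z hzq hzp
  · simp only [Walk.length_append, Walk.length_reverse, Walk.length_cons, Walk.length_concat]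
    omega

end OptimalPath

section Pretransversal

variable {𝓕 : Set (Set V)} {N : ℝ} {U Z : Set V}

/-- The analogue of `IsPretransversal` for an arbitrary family of vertex sets and an arbitrary ratio
`N` between `|U|` and `|Y|`. It does not demand that `Y` is a subset of `U`. -/
structure IsFamilyPretransversal (𝓕 : Set (Set V)) (N : ℝ) (U Y : Set V) : Prop where
  mul_ncard_le : N * Y.ncard ≤ U.ncard
  disjoint_or_inter_nonempty : ∀ Q ∈ 𝓕, Disjoint Q U ∨ (Q ∩ Y).Nonempty

lemma IsFamilyPretransversal.union [Finite V] (h : IsFamilyPretransversal 𝓕 N U Y) (hN : 0 ≤ N)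
    (hUA : Disjoint U A) (hZA : N * Z.ncard ≤ A.ncard)
    (hmeet : ∀ Q ∈ 𝓕, Disjoint Q U → (Q ∩ A).Nonempty → (Q ∩ Z).Nonempty) :
    IsFamilyPretransversal 𝓕 N (U ∪ A) (Y ∪ Z) where
  mul_ncard_le := by
    calc N * (Y ∪ Z).ncard ≤ N * (Y.ncard + Z.ncard) := by
          gcongr
          exact_mod_cast Set.ncard_union_le Y Z
      _ ≤ U.ncard + A.ncard := by linarith [h.mul_ncard_le]
      _ = (U ∪ A).ncard := by rw [Set.ncard_union_eq hUA]; push_cast; rfl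
  disjoint_or_inter_nonempty Q hQ := by
    rw [Set.inter_union_distrib_left, Set.union_nonempty, Set.disjoint_union_right,
      ← Set.not_disjoint_iff_nonempty_inter (t := Z)]
    have := hmeet Q hQ
    rw [← Set.not_disjoint_iff_nonempty_inter, ← Set.not_disjoint_iff_nonempty_inter] at this
    have := h.disjoint_or_inter_nonempty Q hQ
    tauto

lemma exists_isFamilyPretransversal_hasUnbalancedSeparations [Finite V]
    (h𝓕 : IsConnectedIntersecting G 𝓕) (hN : 0 ≤ N) :
    ∃ U Y, IsFamilyPretransversal 𝓕 N U Y ∧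
      HasUnbalancedSeparations (restrict G Uᶜ) Uᶜ N := by
  obtain ⟨U, ⟨Y, hUY⟩, hmax⟩ :=
    (Set.toFinite {U | ∃ Y, IsFamilyPretransversal 𝓕 N U Y}).exists_maximal
      ⟨∅, ∅, by simp, by simp⟩
  refine ⟨U, Y, hUY, fun A B Z hAU hBU hA hB hsep => ?_⟩
  by_contra! hZ
  have exists_member (A : Set V) (hAU : A ⊆ Uᶜ) (hA : A.Nonempty) (hZA : N * Z.ncard ≤ A.ncard) :
      ∃ Q ∈ 𝓕, Disjoint Q U ∧ (Q ∩ A).Nonempty ∧ Disjoint Q Z := by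
    by_contra! hno
    obtain ⟨a, ha⟩ := hA
    have hUA := hUY.union hN (Set.subset_compl_iff_disjoint_left.1 hAU) hZA fun Q hQ hQU hQA =>
      Set.not_disjoint_iff_nonempty_inter.1 (hno Q hQ hQU hQA)
    exact hAU ha (hmax ⟨_, hUA⟩ Set.subset_union_left (.inr ha))
  obtain ⟨Q, hQ, hQU, ⟨a, haQ, ha⟩, hQZ⟩ := exists_member A hAU hA hZ.1
  obtain ⟨R, hR, hRU, ⟨b, hbR, hb⟩, hRZ⟩ := exists_member B hBU hB hZ.2
  obtain ⟨x, hxQ, hxR⟩ := h𝓕.inter_nonempty Q hQ R hR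
  obtain ⟨p⟩ := preconnected_induce_iff_reachable.1 (h𝓕.preconnected Q hQ) a haQ x hxQ
  obtain ⟨q⟩ := preconnected_induce_iff_reachable.1 (h𝓕.preconnected R hR) x hxR b hbR
  obtain ⟨z, hz, hzZ⟩ := hsep a ha b hb ((p.mapLe (restrict_mono hQU.subset_compl_right)).append
    (q.mapLe (restrict_mono hRU.subset_compl_right)))
  simp only [Walk.mem_support_append_iff, Walk.support_mapLe_eq_support] at hz
  exact hz.elim
    (fun hz => Set.disjoint_left.1 hQZ (mem_of_mem_support_restrict p haQ hz) hzZ)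
    (fun hz => Set.disjoint_left.1 hRZ (mem_of_mem_support_restrict q hxR hz) hzZ)

end Pretransversal

section ReplaceSegment

lemma exists_eq_append_append (p : G.Walk u v) {k l : ℕ} (hkl : k ≤ l) (hl : l ≤ p.length)
    (hx : p.getVert k = x) (hy : p.getVert l = y) :
    ∃ (q : G.Walk u x) (r : G.Walk x y) (s : G.Walk y v),
      p = (q.append r).append s ∧ r.length = l - k := by
  subst hx
  obtain rfl : (p.drop k).getVert (l - k) = y := by
    rw [Walk.drop_getVert, Nat.add_sub_cancel' hkl, hy]
  exact ⟨p.take k, (p.drop k).take (l - k), (p.drop k).drop (l - k),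
    by rw [← Walk.append_assoc, Walk.append_take_drop_eq, Walk.append_take_drop_eq],
    by simp only [Walk.take_length, Walk.drop_length]; omega⟩

lemma isCycle_copy_iff (p : G.Walk u v) (h : v = u) :
    (p.copy rfl h).IsCycle ↔ 3 ≤ p.length ∧ p.support.tail.Nodup := by
  subst h
  rw [Walk.copy_rfl_rfl, Walk.isCycle_iff_isPath_tail_and_le_length, and_comm]
  refine and_congr_right fun hl => ?_
  rw [Walk.isPath_def, Walk.support_tail_of_not_nil]
  rw [Walk.not_nil_iff_lt_length]
  omega

variable {p : G.Walk u x} {q d : G.Walk x y} {r : G.Walk y v}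

lemma nodup_support_tail_replace (h : ((p.append q).append r).support.tail.Nodup)
    (hq : 0 < q.length) (hd : d.IsPath)
    (hdpr : ∀ z ∈ d.support, z ∈ p.support ∨ z ∈ r.support → z = x ∨ z = y) :
    ((p.append d).append r).support.tail.Nodup := by
  have hyq := Walk.end_mem_tail_support (Walk.not_nil_iff_lt_length.2 hq)
  have eq_end : ∀ z ∈ d.support.tail, z ∈ p.support ∨ z ∈ r.support → z = y := fun z hz hz' =>
    (hdpr z (List.mem_of_mem_tail hz) hz').resolve_left fun hzx =>
      start_notMem_support_tail hd (hzx ▸ hz)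
  simp only [Walk.tail_support_append, List.nodup_append', List.disjoint_append_left] at h ⊢
  refine ⟨⟨h.1.1, hd.support_nodup.tail, fun z hzp hzd => ?_⟩, h.2.1, h.2.2.1, fun z hzd hzr => ?_⟩
  · obtain rfl := eq_end z hzd (.inl (List.mem_of_mem_tail hzp))
    exact h.1.2.2 hzp hyq
  · obtain rfl := eq_end z hzd (.inr (List.mem_of_mem_tail hzr))
    exact h.2.2.2 hyq hzr

lemma isPath_replace (h : ((p.append q).append r).IsPath) (hq : 0 < q.length) (hd : d.IsPath)
    (hdpr : ∀ z ∈ d.support, z ∈ p.support ∨ z ∈ r.support → z = x ∨ z = y) :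
    ((p.append d).append r).IsPath := by
  have hu := start_notMem_support_tail h
  rw [Walk.isPath_def, ← Walk.cons_tail_support, List.nodup_cons]
  refine ⟨?_, nodup_support_tail_replace h.support_nodup.tail hq hd hdpr⟩
  simp only [Walk.tail_support_append, List.mem_append, not_or] at hu ⊢
  refine ⟨⟨hu.1.1, fun hud => ?_⟩, hu.2⟩
  rcases hdpr u (List.mem_of_mem_tail hud) (.inl p.start_mem_support) with rfl | rfl
  · exact start_notMem_support_tail hd hud
  · exact hu.1.2 (Walk.end_mem_tail_support (Walk.not_nil_iff_lt_length.2 hq))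

end ReplaceSegment

/-- The data of an `M`-subdivision in `G`, as in `IsSubdivisionIn`. -/
structure Subdivision (M : Multigraph W F) (G : SimpleGraph V) where
  b : W → V
  u : F → W
  v : F → W
  P : ∀ e : F, G.Walk (b (u e)) (b (v e))
  injective : Function.Injective b
  ends_eq : ∀ e, M.ends e = s(u e, v e)
  isCycle : ∀ e, ∀ h : u e = v e, ((P e).copy rfl (congrArg b h.symm)).IsCycle
  isPath : ∀ e, u e ≠ v e → (P e).IsPath
  eq_of_mem_range : ∀ e, ∀ x ∈ (P e).support, x ∈ Set.range b → x = b (u e) ∨ x = b (v e)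
  mem_range_of_ne : ∀ e e', e ≠ e' → ∀ x, x ∈ (P e).support → x ∈ (P e').support → x ∈ Set.range b
  edges_disjoint : ∀ e e', e ≠ e' → ∀ a, a ∈ (P e).edges → a ∉ (P e').edges

namespace Subdivision

variable {M : Multigraph W F} (D : Subdivision M G)

/-- The subgraph of `G` formed by a subdivision. -/
def toSubgraph : G.Subgraph where
  verts := Set.range D.b ∪ ⋃ e, {x | x ∈ (D.P e).support}
  Adj x y := ∃ e, (D.P e).toSubgraph.Adj x y
  adj_sub := fun ⟨_, h⟩ => h.adj_sub
  edge_vert := fun ⟨e, h⟩ => .inr (Set.mem_iUnion.2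
    ⟨e, (D.P e).mem_verts_toSubgraph.1 ((D.P e).toSubgraph.edge_vert h)⟩)
  symm := ⟨fun _ _ ⟨e, h⟩ => ⟨e, h.symm⟩⟩

/-- The vertex set of a subdivision. -/
abbrev verts : Set V := D.toSubgraph.verts

/-- The number of edges of a subdivision. -/
def length [Fintype F] : ℕ := ∑ e, (D.P e).length

lemma isSubdivisionIn_toSubgraph : IsSubdivisionIn M G D.toSubgraph :=
  ⟨D.b, D.u, D.v, D.P, D.injective, D.ends_eq, D.isCycle, D.isPath, D.eq_of_mem_range,
    D.mem_range_of_ne, D.edges_disjoint, rfl, fun _ _ => Iff.rfl⟩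

lemma support_subset_verts (e : F) : {x | x ∈ (D.P e).support} ⊆ D.verts :=
  fun _ hx => .inr (Set.mem_iUnion.2 ⟨e, hx⟩)

lemma edges_nodup (e : F) : (D.P e).edges.Nodup := by
  by_cases h : D.u e = D.v e
  · simpa using (D.isCycle e h).edges_nodup
  · exact (D.isPath e h).edges_nodup

lemma ncard_edgeSet [Fintype F] : D.toSubgraph.edgeSet.ncard = D.length := by
  classical
  have : D.toSubgraph.edgeSet = ↑(Finset.univ.biUnion fun e => (D.P e).edges.toFinset) := by
    ext a
    induction a with
    | _ x y => simp [toSubgraph, Walk.adj_toSubgraph_iff_mem_edges]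
  rw [this, Set.ncard_coe_finset, Finset.card_biUnion]
  · refine Finset.sum_congr rfl fun e _ => ?_
    rw [List.toFinset_card_of_nodup (D.edges_nodup e), Walk.length_edges]
  · intro e _ e' _ h
    exact Finset.disjoint_left.2 fun a ha ha' =>
      D.edges_disjoint e e' h a (List.mem_toFinset.1 ha) (List.mem_toFinset.1 ha')

lemma reachable_b (hM : M.Connected) (w w' : W) :
    (restrict G D.verts).Reachable (D.b w) (D.b w') := by
  induction hM.2 w w' with
  | refl => exact .rfl
  | @tail s t _ hst ih =>
    obtain ⟨e, he⟩ := hst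
    refine ih.trans ?_
    obtain ⟨q, -⟩ := exists_restrict_walk (D.P e) (D.support_subset_verts e)
    rw [D.ends_eq, Sym2.eq_iff] at he
    rcases he with ⟨rfl, rfl⟩ | ⟨rfl, rfl⟩
    exacts [⟨q⟩, ⟨q.reverse⟩]

lemma preconnected_induce_verts (hM : M.Connected) : (G.induce D.verts).Preconnected := by
  classical
  have reachable_branch : ∀ x ∈ D.verts, ∃ w, (restrict G D.verts).Reachable x (D.b w) := by
    rintro x (⟨w, rfl⟩ | hx)
    · exact ⟨w, .rfl⟩
    · obtain ⟨e, he⟩ := Set.mem_iUnion.1 hx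
      obtain ⟨q, -⟩ := exists_restrict_walk ((D.P e).dropUntil x he) fun z hz =>
        D.support_subset_verts e ((D.P e).support_dropUntil_subset_support he hz)
      exact ⟨_, ⟨q⟩⟩
  refine preconnected_induce_iff_reachable.2 fun x hx y hy => ?_
  obtain ⟨w, hw⟩ := reachable_branch x hx
  obtain ⟨w', hw'⟩ := reachable_branch y hy
  exact (hw.trans (D.reachable_b hM w w')).trans hw'.symm

lemma exists_b_mem_support (hM : M.Connected) {w w' : W} (h : w ≠ w') :
    ∃ e, D.b w ∈ (D.P e).support := by
  obtain hw | ⟨c, ⟨e, he⟩, -⟩ := Relation.ReflTransGen.cases_head (hM.2 w w')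
  · exact absurd hw h
  · rw [D.ends_eq, Sym2.eq_iff] at he
    obtain ⟨rfl, -⟩ | ⟨-, rfl⟩ := he
    exacts [⟨e, Walk.start_mem_support _⟩, ⟨e, Walk.end_mem_support _⟩]

lemma exists_mem_support (hM : M.Connected) (hD : D.verts.Nontrivial) (hx : x ∈ D.verts) :
    ∃ e, x ∈ (D.P e).support := by
  obtain ⟨w, rfl⟩ | hx := hx
  · obtain ⟨y, ⟨w', rfl⟩ | hy, hyw⟩ := hD.exists_ne (D.b w)
    · exact D.exists_b_mem_support hM fun h => hyw (congrArg D.b h.symm)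
    · obtain ⟨e, -⟩ := Set.mem_iUnion.1 hy
      by_cases hw : w = D.u e
      · exact ⟨e, by simp [hw]⟩
      · exact D.exists_b_mem_support hM hw
  · exact Set.mem_iUnion.1 hx

lemma getVert_injOn (e : F) : Set.InjOn (D.P e).getVert (Set.Iio (D.P e).length) := by
  intro k hk l hl h
  by_cases he : D.u e = D.v e
  · exact eq_of_getVert_eq (D.isCycle e he) (by simpa using hk) (by simpa using hl)
      (by simpa using h)
  · exact (D.isPath e he).getVert_injOn (Set.Iio_subset_Iic_self hk) (Set.Iio_subset_Iic_self hl) h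

lemma getVert_notMem_range {e : F} {k : ℕ} (hk : k ∈ Set.Ioo 0 (D.P e).length) :
    (D.P e).getVert k ∉ Set.range D.b := by
  have hne : (D.P e).getVert k ≠ D.b (D.u e) := fun h =>
    hk.1.ne' (D.getVert_injOn e hk.2 (hk.1.trans hk.2) (by simpa using h))
  intro h
  have hv := (D.eq_of_mem_range e _ ((D.P e).getVert_mem_support k) h).resolve_left hne
  by_cases he : D.u e = D.v e
  · exact hne (hv.trans (congrArg D.b he.symm))
  · have := (D.isPath e he).getVert_injOn hk.2.le (le_refl (D.P e).length) (by simpa using hv)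
    exact hk.2.ne this

lemma length_le [Finite V] [Fintype F] : D.length ≤ D.verts.ncard + Fintype.card F := by
  let interior (e : F) : Set V := (D.P e).getVert '' Set.Ioo 0 (D.P e).length
  have hdisj : Pairwise (Function.onFun Disjoint interior) := fun e e' he => by
    refine Set.disjoint_left.2 ?_
    rintro _ ⟨k, hk, rfl⟩ ⟨l, -, hl⟩
    exact D.getVert_notMem_range hk (D.mem_range_of_ne e e' he _
      ((D.P e).getVert_mem_support k) (hl ▸ (D.P e').getVert_mem_support l))
  have hcard (e : F) : (interior e).ncard = (D.P e).length - 1 := by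
    rw [((D.getVert_injOn e).mono Set.Ioo_subset_Iio_self).ncard_image, ← Finset.coe_Ioo,
      Set.ncard_coe_finset, Nat.card_Ioo, Nat.sub_zero]
  have hsum := sum_ncard_le_ncard hdisj Finset.univ (X := D.verts) fun e _ => by
    rintro _ ⟨k, -, rfl⟩
    exact D.support_subset_verts e ((D.P e).getVert_mem_support k)
  calc D.length ≤ ∑ e, ((interior e).ncard + 1) :=
        Finset.sum_le_sum fun e _ => by rw [hcard]; omega
    _ ≤ D.verts.ncard + Fintype.card F := by
        rw [Finset.sum_add_distrib, Finset.sum_const, Finset.card_univ, smul_eq_mul, mul_one]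
        exact Nat.add_le_add_right hsum _

end Subdivision

lemma exists_eq_toSubgraph {M : Multigraph W F} {Q : G.Subgraph} (h : IsSubdivisionIn M G Q) :
    ∃ D : Subdivision M G, D.toSubgraph = Q := by
  obtain ⟨b, u, v, P, hinj, hends, hcycle, hpath, hrange, hne, hedges, hverts, hadj⟩ := h
  refine ⟨⟨b, u, v, P, hinj, hends, hcycle, hpath, hrange, hne, hedges⟩, ?_⟩
  ext x y
  · rw [hverts]
    rfl
  · rw [hadj]
    rfl

lemma Subdivision.length_le_of_isMaxSubdivisionIn [Fintype F] {M : Multigraph W F}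
    {D : Subdivision M G} (hD : IsMaxSubdivisionIn M G ⊤ D.toSubgraph) (D' : Subdivision M G) :
    D'.length ≤ D.length := by
  rw [← D.ncard_edgeSet, ← D'.ncard_edgeSet]
  exact hD.2.2 _ D'.isSubdivisionIn_toSubgraph le_top

namespace Subdivision

variable {M : Multigraph W F} (D : Subdivision M G)

/-- The subdivision obtained by replacing the path (or cycle) that represents the edge `e`. -/
def replacePath [DecidableEq F] (e : F) (p : G.Walk (D.b (D.u e)) (D.b (D.v e)))
    (hcycle : ∀ h : D.u e = D.v e, (p.copy rfl (congrArg D.b h.symm)).IsCycle)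
    (hpath : D.u e ≠ D.v e → p.IsPath)
    (hverts : ∀ z ∈ p.support, z ∈ D.verts → z ∈ (D.P e).support)
    (hedges : ∀ e' ≠ e, ∀ a ∈ p.edges, a ∉ (D.P e').edges) : Subdivision M G where
  b := D.b
  u := D.u
  v := D.v
  P := Function.update D.P e p
  injective := D.injective
  ends_eq := D.ends_eq
  isCycle e' h := by
    rcases eq_or_ne e' e with rfl | he
    · simpa only [Function.update_self] using hcycle h
    · simpa only [Function.update_of_ne he] using D.isCycle e' h
  isPath e' h := by
    rcases eq_or_ne e' e with rfl | he
    · simpa only [Function.update_self] using hpath h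
    · simpa only [Function.update_of_ne he] using D.isPath e' h
  eq_of_mem_range e' := by
    rcases eq_or_ne e' e with rfl | he
    · rw [Function.update_self]
      exact fun z hz hzb => D.eq_of_mem_range _ z (hverts z hz (.inl hzb)) hzb
    · rw [Function.update_of_ne he]
      exact D.eq_of_mem_range e'
  mem_range_of_ne e' e'' h := by
    have hne (e') (he : e' ≠ e) (z) (hz : z ∈ p.support) (hz' : z ∈ (D.P e').support) :
        z ∈ Set.range D.b :=
      D.mem_range_of_ne _ _ he.symm z (hverts z hz (D.support_subset_verts e' hz')) hz'
    rcases eq_or_ne e' e with rfl | he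
    · rw [Function.update_self, Function.update_of_ne h.symm]
      exact hne e'' h.symm
    · rw [Function.update_of_ne he]
      rcases eq_or_ne e'' e with rfl | he'
      · rw [Function.update_self]
        exact fun z hz hz' => hne e' h z hz' hz
      · rw [Function.update_of_ne he']
        exact D.mem_range_of_ne e' e'' h
  edges_disjoint e' e'' h := by
    rcases eq_or_ne e' e with rfl | he
    · rw [Function.update_self, Function.update_of_ne h.symm]
      exact hedges e'' h.symm
    · rw [Function.update_of_ne he]
      rcases eq_or_ne e'' e with rfl | he'
      · rw [Function.update_self]
        exact fun a ha ha' => hedges e' h a ha' ha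
      · rw [Function.update_of_ne he']
        exact D.edges_disjoint e' e'' h

variable {D}

lemma length_lt_length_replacePath [DecidableEq F] [Fintype F] {e : F}
    {p : G.Walk (D.b (D.u e)) (D.b (D.v e))} {hcycle hpath hverts hedges}
    (h : (D.P e).length < p.length) :
    D.length < (D.replacePath e p hcycle hpath hverts hedges).length := by
  refine Finset.sum_lt_sum (fun e' _ => ?_) ⟨e, Finset.mem_univ e, ?_⟩
  · rcases eq_or_ne e' e with rfl | he
    · simpa only [replacePath, Function.update_self] using h.le
    · simp only [replacePath, Function.update_of_ne he, le_refl]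
  · simpa only [replacePath, Function.update_self] using h

lemma notMem_edges_of_meets_only_ends {e : F} {d : G.Walk x y} (hd : d.IsPath)
    (hdD : ∀ z ∈ d.support, z ∈ D.verts → z = x ∨ z = y) (hlen : 1 < d.length) :
    ∀ a ∈ d.edges, a ∉ (D.P e).edges := by
  refine Sym2.ind fun s t had ha => ?_
  have hs := hdD s (d.fst_mem_support_of_mem_edges had)
    (D.support_subset_verts e (Walk.fst_mem_support_of_mem_edges _ ha))
  have ht := hdD t (d.snd_mem_support_of_mem_edges had)
    (D.support_subset_verts e (Walk.snd_mem_support_of_mem_edges _ ha))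
  have hst := (d.adj_of_mem_edges had).ne
  refine hlen.ne' (hd.length_eq_one_of_mem_edges ?_)
  rcases hs with rfl | rfl <;> rcases ht with rfl | rfl
  exacts [absurd rfl hst, had, Sym2.eq_swap ▸ had, absurd rfl hst]

lemma exists_longer_of_append [Fintype F] {e : F} {p : G.Walk (D.b (D.u e)) x} {q d : G.Walk x y}
    {r : G.Walk y (D.b (D.v e))} (hP : D.P e = (p.append q).append r) (hq : 0 < q.length)
    (hd : d.IsPath) (hdD : ∀ z ∈ d.support, z ∈ D.verts → z = x ∨ z = y)
    (hqd : q.length < d.length) : ∃ D' : Subdivision M G, D.length < D'.length := by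
  classical
  have hsupp : ∀ z, z ∈ p.support ∨ z ∈ r.support → z ∈ (D.P e).support := fun z hz => by
    simp only [hP, Walk.mem_support_append_iff]
    tauto
  have hdpr : ∀ z ∈ d.support, z ∈ p.support ∨ z ∈ r.support → z = x ∨ z = y := fun z hz hz' =>
    hdD z hz (D.support_subset_verts e (hsupp z hz'))
  have hlen : (D.P e).length = p.length + q.length + r.length := by simp [hP]
  have hlen' : ((p.append d).append r).length = p.length + d.length + r.length := by simp
  have hcycle (h : D.u e = D.v e) := by
    have := (isCycle_copy_iff _ _).1 (D.isCycle e h)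
    refine (isCycle_copy_iff ((p.append d).append r) (congrArg D.b h.symm)).2
      ⟨by omega, nodup_support_tail_replace (hP ▸ this.2) hq hd hdpr⟩
  have hverts (z) (hz : z ∈ ((p.append d).append r).support) (hzD : z ∈ D.verts) :
      z ∈ (D.P e).support := by
    simp only [Walk.mem_support_append_iff] at hz
    obtain (hz | hz) | hz := hz
    · exact hsupp z (.inl hz)
    · obtain rfl | rfl := hdD z hz hzD
      exacts [hsupp _ (.inl p.end_mem_support), hsupp _ (.inr r.start_mem_support)]
    · exact hsupp z (.inr hz)
  have hedges (e') (he' : e' ≠ e) (a) (ha : a ∈ ((p.append d).append r).edges) :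
      a ∉ (D.P e').edges := by
    by_cases had : a ∈ d.edges
    · exact notMem_edges_of_meets_only_ends hd hdD (by omega) a had
    · refine D.edges_disjoint e e' he'.symm a ?_
      simp only [hP, Walk.edges_append, List.mem_append] at ha ⊢
      tauto
  exact ⟨D.replacePath e ((p.append d).append r) hcycle
    (fun h => isPath_replace (hP ▸ D.isPath e h) hq hd hdpr) hverts hedges,
    length_lt_length_replacePath (by omega)⟩

/-- The path `d` replaces the segment between the positions `k` and `l` of the path for `e`. -/
lemma exists_longer_of_path [Fintype F] {e : F} {k l : ℕ} (hk : k ≤ (D.P e).length)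
    (hl : l ≤ (D.P e).length) {d : G.Walk x y} (hx : (D.P e).getVert k = x)
    (hy : (D.P e).getVert l = y) (hxy : x ≠ y) (hd : d.IsPath)
    (hdD : ∀ z ∈ d.support, z ∈ D.verts → z = x ∨ z = y) (hlen : Nat.dist k l < d.length) :
    ∃ D' : Subdivision M G, D.length < D'.length := by
  wlog hkl : k ≤ l generalizing k l x y
  · exact this hl hk hy hx hxy.symm hd.reverse (by simpa [or_comm] using hdD)
      (by rwa [Walk.length_reverse, Nat.dist_comm]) (not_le.1 hkl).le
  have hkl' : k ≠ l := by
    rintro rfl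
    exact hxy (hx.symm.trans hy)
  rw [Nat.dist_eq_sub_of_le hkl] at hlen
  obtain ⟨p, q, r, hP, hq⟩ := exists_eq_append_append (D.P e) hkl hl hx hy
  exact exists_longer_of_append hP (by omega) hd hdD (by omega)

end Subdivision

lemma ncard_support_of_isCycle {c : G.Walk u u} (hc : c.IsCycle) :
    {x | x ∈ c.support}.ncard = c.length := by
  have : {x | x ∈ c.support} = c.getVert '' Set.Iio c.length := by
    ext x
    refine ⟨exists_getVert_eq_of_isCycle hc, ?_⟩
    rintro ⟨i, -, rfl⟩
    exact c.getVert_mem_support i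
  have hinj : Set.InjOn c.getVert (Set.Iio c.length) := fun i hi j hj => eq_of_getVert_eq hc hi hj
  rw [this, hinj.ncard_image, ← Finset.coe_Iio, Set.ncard_coe_finset, Nat.card_Iio]

lemma isPath_append {p : G.Walk u v} {q : G.Walk v w} (hp : p.IsPath) (hq : q.IsPath)
    (h : ∀ z ∈ p.support, z ∈ q.support → z = v) : (p.append q).IsPath := by
  rw [Walk.isPath_def, Walk.support_append, List.nodup_append']
  refine ⟨hp.support_nodup, hq.support_nodup.tail, fun z hz hz' => ?_⟩
  obtain rfl := h z hz (List.mem_of_mem_tail hz')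
  exact start_notMem_support_tail hq hz'

lemma exists_path_through_cycle {c : G.Walk w w} (hc : c.IsCycle) (hcB : ∀ z ∈ c.support, z ∉ B)
    (hsep : ∀ z, ¬ Separates G {z} {z | z ∈ c.support} B) :
    ∃ x ∈ B, ∃ y ∈ B, x ≠ y ∧ ∃ d : G.Walk x y, d.IsPath ∧ c.length < 2 * d.length ∧
      ∀ z ∈ d.support, z ∈ B → z = x ∨ z = y := by
  have : Nonempty V := ⟨w⟩
  obtain ⟨a₁, ha₁, a₂, ha₂, b₁, hb₁, b₂, hb₂, p₁, p₂, hp⟩ :=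
    exists_linked_of_forall_not_separates c.connected_induce_support.preconnected hsep
  obtain ⟨x₁, hx₁, y₁, hy₁, q₁, hq₁, hqp₁, hqc₁, hqB₁⟩ := exists_path_meeting_only_ends p₁ ha₁ hb₁
  obtain ⟨x₂, hx₂, y₂, hy₂, q₂, hq₂, hqp₂, hqc₂, hqB₂⟩ := exists_path_meeting_only_ends p₂ ha₂ hb₂
  have hq : ∀ z ∈ q₁.support, z ∉ q₂.support := fun z h₁ h₂ => hp (hqp₁ h₁) (hqp₂ h₂)
  obtain ⟨i, hi, rfl⟩ := exists_getVert_eq_of_isCycle hc hx₁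
  obtain ⟨j, hj, rfl⟩ := exists_getVert_eq_of_isCycle hc hx₂
  obtain ⟨r, hr, hrc, hrl⟩ := exists_long_arc hc hi hj fun hij =>
    hq _ q₁.start_mem_support (hij ▸ q₂.start_mem_support)
  have hrlong : c.length ≤ 2 * r.length := by
    rw [hrl, cyclicDist]
    omega
  have hq₁pos : 0 < q₁.length := Walk.not_nil_iff_lt_length.1 fun h =>
    hcB _ hx₁ (h.eq ▸ hy₁)
  refine ⟨y₁, hy₁, y₂, hy₂, fun h => hq _ q₁.end_mem_support (h ▸ q₂.end_mem_support),
    q₁.reverse.append (r.append q₂), ?_, ?_, fun z hz hzB => ?_⟩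
  · refine isPath_append hq₁.reverse
      (isPath_append hr hq₂ fun z hzr hz => hqc₂ z hz (hrc hzr)) fun z hz hz' => ?_
    rw [Walk.support_reverse, List.mem_reverse] at hz
    rw [Walk.mem_support_append_iff] at hz'
    exact hqc₁ z hz (hrc (hz'.resolve_right (hq z hz)))
  · simp only [Walk.length_append, Walk.length_reverse]
    omega
  · simp only [Walk.mem_support_append_iff, Walk.support_reverse, List.mem_reverse] at hz
    obtain hz | hz | hz := hz
    exacts [.inl (hqB₁ z hz hzB), absurd hzB (hcB z (hrc hz)), .inr (hqB₂ z hz hzB)]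

lemma separates_range_of_forall {ι : Type*} {S : ι → Set V} {z : ι → V}
    (h : ∀ i, Separates (restrict G ((⋃ j, S j) \ S i)ᶜ) {z i} A (S i)) :
    Separates G (Set.range z) A (⋃ i, S i) := by
  intro a ha b hb p
  obtain ⟨x, hx, q, hqp, hqx⟩ := exists_walk_to_first_mem p ⟨b, p.end_mem_support, hb⟩
  obtain ⟨i, hi⟩ := Set.mem_iUnion.1 hx
  obtain ⟨r, hr⟩ := exists_restrict_walk (X := ((⋃ j, S j) \ S i)ᶜ) q fun y hy hyS =>
    hyS.2 (hqx y hy hyS.1 ▸ hi)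
  obtain ⟨_, hz, rfl⟩ := h i a ha x hi r
  exact ⟨z i, hqp (hr ▸ hz), i, rfl⟩

namespace Subdivision

variable {M : Multigraph W F} (D : Subdivision M G) {g : ℕ}

/-- The `j`-th of the segments into which the path for `e` is cut at every `g`-th vertex. -/
def segment (g : ℕ) (e : F) (j : ℕ) : Set V :=
  (D.P e).getVert '' {k | k ≤ (D.P e).length ∧ k / g = j}

lemma segment_subset_verts (g : ℕ) (e : F) (j : ℕ) : D.segment g e j ⊆ D.verts := by
  rintro _ ⟨k, -, rfl⟩
  exact D.support_subset_verts e ((D.P e).getVert_mem_support k)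

lemma iUnion_segment (hM : M.Connected) (hD : D.verts.Nontrivial) (g : ℕ) :
    ⋃ t : Σ e, Fin ((D.P e).length / g + 1), D.segment g t.1 t.2 = D.verts := by
  refine (Set.iUnion_subset fun _ => D.segment_subset_verts g _ _).antisymm fun x hx => ?_
  obtain ⟨e, he⟩ := D.exists_mem_support hM hD hx
  obtain ⟨k, rfl, hk⟩ := Walk.mem_support_iff_exists_getVert.1 he
  exact Set.mem_iUnion.2
    ⟨⟨e, k / g, Nat.lt_succ_of_le (Nat.div_le_div_right hk)⟩, k, ⟨hk, rfl⟩, rfl⟩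

variable {D}

lemma exists_longer_of_segment [Fintype F] (hHG : H ≤ G) {e : F} {j : ℕ} (hg : 0 < g)
    {c : H.Walk w w} (hc : c.IsCycle) (hcD : ∀ x ∈ c.support, x ∉ D.verts)
    (hcg : 2 * g ≤ c.length + 2)
    (hsep : ∀ z, ¬ Separates (restrict H (D.verts \ D.segment g e j)ᶜ) {z}
      {x | x ∈ c.support} (D.segment g e j)) :
    ∃ D' : Subdivision M G, D.length < D'.length := by
  have hedges := mem_edgeSet_restrict (X := (D.verts \ D.segment g e j)ᶜ) c
    fun x hx h => hcD x hx h.1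
  obtain ⟨x, ⟨k, ⟨hk, hkj⟩, hx⟩, y, ⟨l, ⟨hl, hlj⟩, hy⟩, hxy, d, hd, hdlong, hdB⟩ :=
    exists_path_through_cycle (B := D.segment g e j) (hc.transfer hedges)
      (fun z hz hzB => hcD z (by simpa using hz) (D.segment_subset_verts g e j hzB))
      (by simpa using hsep)
  have hxseg : x ∈ D.segment g e j := ⟨k, ⟨hk, hkj⟩, hx⟩
  refine exists_longer_of_path hk hl (d := d.mapLe (restrict_le.trans hHG)) hx hy hxy
    ((Walk.isPath_mapLe _).2 hd) (fun z hz hzD => hdB z (by simpa using hz) ?_) ?_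
  · by_contra hzB
    exact mem_of_mem_support_restrict d (fun h => h.2 hxseg) (by simpa using hz) ⟨hzD, hzB⟩
  · have hdist : Nat.dist k l + 1 ≤ g := by
      have hk' := Nat.div_add_mod k g
      have hl' := Nat.div_add_mod l g
      have := Nat.mod_lt k hg
      have := Nat.mod_lt l hg
      rw [hkj] at hk'
      rw [hlj] at hl'
      rw [Nat.dist]
      omega
    rw [Walk.length_transfer] at hdlong
    rw [Walk.length_mapLe]
    omega

/-- If no segment is well connected to the cycle, then the vertices cutting off the segments
separate the cycle from the subdivision. -/
lemma exists_longer_of_cycle [Finite V] [Fintype F] (hM : M.Connected) (hHG : H ≤ G) {T : Set V}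
    {N : ℝ} (hH : HasUnbalancedSeparations H T N) (hHT : H.support ⊆ T) (hN : 0 ≤ N) (hg : 0 < g)
    (hDT : D.verts ⊆ T) {c : H.Walk w w} (hc : c.IsCycle) (hcD : ∀ x ∈ c.support, x ∉ D.verts)
    (hcg : 2 * g ≤ c.length + 2) (hcV : c.length ≤ D.verts.ncard)
    (hcN : N * (∑ e, ((D.P e).length / g + 1) : ℕ) ≤ c.length) :
    ∃ D' : Subdivision M G, D.length < D'.length := by
  have hD : D.verts.Nontrivial :=
    Set.one_lt_ncard_iff_nontrivial.1 (by have := hc.three_le_length; omega)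
  have hunion := D.iUnion_segment hM hD g
  by_contra hD'
  have hcut (t : Σ e, Fin ((D.P e).length / g + 1)) :
      ∃ z, Separates (restrict H (D.verts \ D.segment g t.1 t.2)ᶜ) {z} {x | x ∈ c.support}
        (D.segment g t.1 t.2) := by
    by_contra! hsep
    exact hD' (exists_longer_of_segment hHG hg hc hcD hcg hsep)
  choose z hz using hcut
  have hsep : Separates H (Set.range z) {x | x ∈ c.support} D.verts := by
    rw [← hunion] at hz ⊢
    exact separates_range_of_forall hz
  have hcard : N * (Set.range z).ncard ≤ c.length := by
    refine le_trans (mul_le_mul_of_nonneg_left (Nat.cast_le.2 ?_) hN) hcN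
    calc (Set.range z).ncard ≤ Nat.card (Σ e, Fin ((D.P e).length / g + 1)) :=
          Finite.card_range_le z
      _ = _ := by simp
  have hcT : {x | x ∈ c.support} ⊆ T := fun x hx =>
    hHT (mem_support_of_mem_walk_support c hc.not_nil hx)
  have := hH hcT hDT ⟨w, c.start_mem_support⟩ hD.nonempty hsep
  rw [ncard_support_of_isCycle hc] at this
  have : (c.length : ℝ) ≤ D.verts.ncard := Nat.cast_le.2 hcV
  grind

variable (D) in
lemma sum_length_div_le [Fintype F] (g : ℕ) :
    ((∑ e, ((D.P e).length / g + 1) : ℕ) : ℝ) ≤ D.length / g + Fintype.card F := by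
  calc ((∑ e, ((D.P e).length / g + 1) : ℕ) : ℝ)
      ≤ ∑ e, (((D.P e).length : ℝ) / g + 1) := by
        push_cast
        gcongr
        exact Nat.cast_div_le
    _ = D.length / g + Fintype.card F := by
        simp [length, Finset.sum_add_distrib, Finset.sum_div]

end Subdivision

lemma IsConnectedIntersecting.restrict_compl {𝓕 : Set (Set V)} (h𝓕 : IsConnectedIntersecting G 𝓕)
    (U : Set V) : IsConnectedIntersecting (restrict G Uᶜ) {Q ∈ 𝓕 | Disjoint Q U} where
  preconnected := by
    rintro Q ⟨hQ, hQU⟩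
    convert h𝓕.preconnected Q hQ using 1
    ext x y
    simp only [comap_adj, restrict_adj, Function.Embedding.subtype_apply, and_iff_left_iff_imp]
    exact fun _ => ⟨hQU.subset_compl_right x.2, hQU.subset_compl_right y.2⟩
  inter_nonempty Q hQ R hR := h𝓕.inter_nonempty Q hQ.1 R hR.1

section MaxSubdivisions

variable {M : Multigraph W F}

/-- The vertex sets of the members of `L(M,G)`. -/
def maxSubdivisionVerts (M : Multigraph W F) (G : SimpleGraph V) : Set (Set V) :=
  Subgraph.verts '' {Q | IsMaxSubdivisionIn M G ⊤ Q}

lemma isConnectedIntersecting_maxSubdivisionVerts (hM : M.Connected)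
    (hpi : PairwiseIntersectingIn M G ⊤) :
    IsConnectedIntersecting G (maxSubdivisionVerts M G) where
  preconnected := by
    rintro _ ⟨Q, hQ, rfl⟩
    obtain ⟨D, rfl⟩ := exists_eq_toSubgraph hQ.1
    exact D.preconnected_induce_verts hM
  inter_nonempty := by
    rintro _ ⟨Q, hQ, rfl⟩ _ ⟨R, hR, rfl⟩
    exact hpi Q R hQ hR

variable [Finite V] [Fintype F] {N L : ℝ}

lemma Subdivision.exists_longer_of_two_mul_le_length {D : Subdivision M G} (hM : M.Connected)
    (hHG : H ≤ G) {T : Set V} (hH : HasUnbalancedSeparations H T N) (hHT : H.support ⊆ T)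
    (hN : 1 ≤ N) (hNL : N ≤ L) (hmL : Fintype.card F ≤ L) (hV : Nat.card V ≤ N ^ 3)
    (hDT : D.verts ⊆ T) {c : H.Walk w w} (hc : c.IsCycle)
    (hcD : Disjoint D.verts {x | x ∈ c.support}) (hcL : 2 * N * L ≤ c.length)
    (hcV : c.length ≤ D.verts.ncard) :
    ∃ D' : Subdivision M G, D.length < D'.length := by
  have hNN : N ^ 2 ≤ N * L := by nlinarith
  have hNm : N * Fintype.card F ≤ N * L := by gcongr
  have hg : N ^ 2 ≤ ⌈N ^ 2⌉₊ := Nat.le_ceil _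
  have hg' : (⌈N ^ 2⌉₊ : ℝ) < N ^ 2 + 1 := Nat.ceil_lt_add_one (by positivity)
  have hDV : (D.verts.ncard + c.length : ℝ) ≤ N ^ 3 := by
    rw [← ncard_support_of_isCycle hc, ← Nat.cast_add, ← Set.ncard_union_eq hcD]
    exact (Nat.cast_le.2 (Set.ncard_le_card _)).trans hV
  have hDN : (D.length : ℝ) ≤ N ^ 3 := by
    have : (D.length : ℝ) ≤ D.verts.ncard + Fintype.card F := mod_cast D.length_le
    nlinarith
  have hsegments : N * (∑ e, ((D.P e).length / ⌈N ^ 2⌉₊ + 1) : ℕ) ≤ c.length := by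
    calc N * (∑ e, ((D.P e).length / ⌈N ^ 2⌉₊ + 1) : ℕ)
        ≤ N * (D.length / ⌈N ^ 2⌉₊ + Fintype.card F) := by
          gcongr
          exact D.sum_length_div_le _
      _ ≤ N * (N ^ 3 / N ^ 2 + Fintype.card F) := by gcongr
      _ = N ^ 2 + N * Fintype.card F := by
          field_simp
      _ ≤ c.length := by linarith
  refine exists_longer_of_cycle hM hHG hH hHT (by linarith) (Nat.ceil_pos.2 (by positivity)) hDT hc
    (fun x hx => Set.disjoint_right.1 hcD hx) ?_ hcV hsegments
  rw [← Nat.cast_le (α := ℝ)]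
  push_cast
  linarith

/-- Otherwise there are a cycle of moderate length and a maximum subdivision disjoint from it that
is at least as large, and this subdivision can be enlarged. -/
lemma exists_transversal_avoiding {U : Set V} (hM : M.Connected)
    (hpi : PairwiseIntersectingIn M G ⊤) (hN : 1 ≤ N) (hNL : N ≤ L) (hmL : Fintype.card F ≤ L)
    (hV : Nat.card V ≤ N ^ 3) (hU : HasUnbalancedSeparations (restrict G Uᶜ) Uᶜ N) :
    ∃ S : Set V, (S.ncard : ℝ) ≤ 4 * N * L ∧
      ∀ Q ∈ maxSubdivisionVerts M G, Disjoint Q U → (Q ∩ S).Nonempty := by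
  by_contra! hno
  have hNN : N ^ 2 ≤ N * L := by nlinarith
  have hN2 : 1 ≤ N ^ 2 := one_le_pow₀ hN
  have h𝓕 := isConnectedIntersecting_maxSubdivisionVerts hM hpi
  have hsupp : (restrict G Uᶜ).support ⊆ Uᶜ := fun _ ⟨_, h⟩ => (restrict_adj.1 h).2.1
  obtain ⟨v, c, hc, hcl⟩ := (h𝓕.restrict_compl U).exists_long_cycle (s := ⌊4 * N * L⌋₊)
    (Nat.le_floor (by push_cast; linarith)) fun X hX => by
      obtain ⟨Q, hQ, hQU, hQX⟩ := hno X ((Nat.le_floor_iff (by nlinarith)).1 hX)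
      exact ⟨Q, ⟨hQ, hQU⟩, Set.disjoint_iff_inter_eq_empty.2 hQX⟩
  obtain ⟨w, d, hd, hdl, hdu⟩ := hU.exists_cycle_length_mem_Icc hsupp (by linarith)
    (s := N ^ 2) (r := 2 * N * L) (by linarith) (by nlinarith) (by linarith)
    ⟨v, c, hc, by linarith [Nat.lt_of_floor_lt hcl]⟩
  obtain ⟨_, ⟨Q, hQ, rfl⟩, hQU, hQd⟩ := hno {x | x ∈ d.support} (by
    rw [ncard_support_of_isCycle hd]
    linarith)
  obtain ⟨D, rfl⟩ := exists_eq_toSubgraph hQ.1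
  have hDL : 4 * N * L < D.verts.ncard := by
    by_contra! hDL
    obtain ⟨R, hR, -, hRD⟩ := hno D.verts hDL
    exact (h𝓕.inter_nonempty R hR _ ⟨_, hQ, rfl⟩).ne_empty hRD
  obtain ⟨D', hD'⟩ := D.exists_longer_of_two_mul_le_length hM restrict_le hU hsupp hN hNL hmL hV
    hQU.subset_compl_right hd (Set.disjoint_iff_inter_eq_empty.2 hQd) hdl
    (by rw [← Nat.cast_le (α := ℝ)]; linarith)
  exact (Subdivision.length_le_of_isMaxSubdivisionIn hQ D').not_gt hD'

theorem exists_isTransversalIn_ncard_le (hM : M.Connected) (hpi : PairwiseIntersectingIn M G ⊤)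
    (hN : 1 ≤ N) (hNL : N ≤ L) (hmL : Fintype.card F ≤ L) (hV : Nat.card V ≤ N ^ 3) :
    ∃ S : Set V, IsTransversalIn M G ⊤ S ∧ (S.ncard : ℝ) ≤ 5 * N * L := by
  obtain ⟨U, Y, hUY, hU⟩ := exists_isFamilyPretransversal_hasUnbalancedSeparations
    (isConnectedIntersecting_maxSubdivisionVerts hM hpi) (zero_le_one.trans hN)
  obtain ⟨S, hS, hSQ⟩ := exists_transversal_avoiding hM hpi hN hNL hmL hV hU
  refine ⟨Y ∪ S, fun Q hQ => ?_, ?_⟩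
  · rw [Set.inter_comm, Set.inter_union_distrib_left, Set.union_nonempty]
    exact (hUY.disjoint_or_inter_nonempty Q.verts ⟨Q, hQ, rfl⟩).symm.imp_right
      (hSQ Q.verts ⟨Q, hQ, rfl⟩)
  · have hYN : (Y.ncard : ℝ) ≤ N * L := by
      have hUV : (U.ncard : ℝ) ≤ Nat.card V := Nat.cast_le.2 (Set.ncard_le_card U)
      have : N * Y.ncard ≤ N * (N * L) := by nlinarith [hUY.mul_ncard_le]
      exact le_of_mul_le_mul_left this (by linarith)
    have hunion : ((Y ∪ S).ncard : ℝ) ≤ Y.ncard + S.ncard := mod_cast Set.ncard_union_le Y S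
    linarith

end MaxSubdivisions

lemma mul_rpow_third_le {m n : ℝ} (hm : 0 ≤ m) (h : m ^ 3 ≤ n) :
    m * n ^ ((1 : ℝ) / 3) ≤ n ^ ((2 : ℝ) / 3) := by
  have hn : 0 ≤ n := (pow_nonneg hm 3).trans h
  calc m * n ^ ((1 : ℝ) / 3) ≤ n ^ ((1 : ℝ) / 3) * n ^ ((1 : ℝ) / 3) := by
        gcongr
        rw [one_div, Real.le_rpow_inv_iff_of_pos hm hn (by norm_num)]
        exact_mod_cast h
    _ = n ^ ((2 : ℝ) / 3) := by
        rw [← Real.rpow_add_of_nonneg hn (by norm_num) (by norm_num)]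
        norm_num

theorem gallai_stmt0_general {V W F : Type*} [Fintype V] [Fintype F]
    (M : Multigraph W F) (hM : M.Connected) (G : SimpleGraph V)
    (hpi : PairwiseIntersectingIn M G ⊤) :
    ∃ S : Set V, IsTransversalIn M G ⊤ S ∧
      (S.ncard : ℝ) ≤
        max (5 * (Fintype.card V : ℝ) ^ ((2 : ℝ) / 3))
          (5 * (Fintype.card F : ℝ) * (Fintype.card V : ℝ) ^ ((1 : ℝ) / 3)) := by
  set n : ℝ := (Fintype.card V : ℝ) with hn
  set m : ℝ := (Fintype.card F : ℝ)
  obtain hV | hV := isEmpty_or_nonempty V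
  · refine ⟨∅, fun Q hQ => ?_, by rw [Set.ncard_empty, Nat.cast_zero]; positivity⟩
    obtain ⟨b, -⟩ := hQ.1
    exact hV.elim (b hM.1.some)
  have hn1 : 1 ≤ n := Nat.one_le_cast.2 Fintype.card_pos
  obtain ⟨S, hS, hSn⟩ := exists_isTransversalIn_ncard_le (N := n ^ ((1 : ℝ) / 3))
    (L := max (n ^ ((1 : ℝ) / 3)) m) hM hpi (Real.one_le_rpow hn1 (by norm_num))
    (le_max_left _ _) (le_max_right _ _) (by
      rw [Nat.card_eq_fintype_card, ← hn, ← Real.rpow_mul_natCast (by positivity)]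
      norm_num)
  refine ⟨S, hS, hSn.trans_eq ?_⟩
  rw [mul_max_of_nonneg _ _ (by positivity), mul_assoc, mul_assoc, mul_assoc, mul_comm m,
    ← Real.rpow_add (by positivity)]
  norm_num

/-- If `L(M,G)` is pairwise intersecting and `m^3 < n`, then
`τ(M,G) ≤ max {5 n^{2/3}, 2 m^2 n^{1/3}}`. -/
theorem gallai_stmt0 {V W F : Type*} [Fintype V] [Fintype W] [Fintype F]
    (M : Multigraph W F) (hM : M.Connected) (G : SimpleGraph V)
    (hpi : PairwiseIntersectingIn M G ⊤)
    (hn : (Fintype.card F) ^ 3 < Fintype.card V) :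
    ∃ S : Set V, IsTransversalIn M G ⊤ S ∧
      (S.ncard : ℝ) ≤
        max (5 * (Fintype.card V : ℝ) ^ ((2 : ℝ) / 3))
          (2 * (Fintype.card F : ℝ) ^ 2 * (Fintype.card V : ℝ) ^ ((1 : ℝ) / 3)) := by
  obtain ⟨S, hS, hSn⟩ := gallai_stmt0_general M hM G hpi
  have hm : (Fintype.card F : ℝ) ^ 3 ≤ Fintype.card V := mod_cast hn.le
  have hmn := mul_rpow_third_le (Nat.cast_nonneg _) hm
  exact ⟨S, hS, le_max_of_le_left (hSn.trans (max_le le_rfl (by linarith)))⟩
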